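/- Finite embeddability does not decrease upper Banach density: if X, Y ⊆ ℤ and X is finitely embeddable in Y, then BD(X) ≤ BD(Y). -/

import Mathlib

/-!
The intersection of `X` with a window is finite, so some shift carries it into `Y`, and hence into
the intersection of `Y` with the shifted window of the same length. Thus for each length the maximal
window count of `X` is at most that of `Y`, and taking the infimum over lengths preserves this.
Suprema and infima in `ℝ` take a junk value on unbounded families, so this comparison also
needs the window densities to be bounded (`bddAbove_windowDensity`) and nonnegative.
-/

/-- The upper Banach density of a set of integers: the infimum over interval
lengths `n+1 ≥ 1` of the supremum over positions of the relative density of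
`A` in an interval of that length. -/
noncomputable def upperBanachDensity (A : Set ℤ) : ℝ :=
  ⨅ n : ℕ, ⨆ x : ℤ, ((A ∩ Set.Icc (x + 1) (x + (n : ℤ) + 1)).ncard : ℝ) / ((n : ℝ) + 1)

/-- `X` is finitely embeddable in `Y` if every finite subset of `X` has a
shifted copy inside `Y`. -/
def FinEmbeddable (X Y : Set ℤ) : Prop :=
  ∀ F : Finset ℤ, ↑F ⊆ X → ∃ t : ℤ, ∀ a ∈ F, t + a ∈ Y

theorem finite_window (A : Set ℤ) (a b : ℤ) : (A ∩ Set.Icc a b).Finite :=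
  (Set.finite_Icc a b).inter_of_right A

theorem bddAbove_windowDensity (A : Set ℤ) (n : ℕ) :
    BddAbove (Set.range fun x : ℤ =>
      ((A ∩ Set.Icc (x + 1) (x + (n : ℤ) + 1)).ncard : ℝ) / ((n : ℝ) + 1)) := by
  refine ⟨1, ?_⟩
  rintro _ ⟨x, rfl⟩
  have h : (A ∩ Set.Icc (x + 1) (x + (n : ℤ) + 1)).ncard ≤ n + 1 := by
    refine (Set.ncard_le_ncard Set.inter_subset_right (Set.finite_Icc _ _)).trans ?_
    rw [← Finset.coe_Icc, Set.ncard_coe_finset, Int.card_Icc]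
    omega
  have hn : (0 : ℝ) < (n : ℝ) + 1 := by positivity
  rw [div_le_one hn]
  exact_mod_cast h

/-- Each window of `X` is matched by a window of `Y` of the same length with at least as many
points. -/
theorem FinEmbeddable.exists_window_ncard_le {X Y : Set ℤ} (hfe : FinEmbeddable X Y)
    (n : ℕ) (x : ℤ) : ∃ y : ℤ,
      (X ∩ Set.Icc (x + 1) (x + (n : ℤ) + 1)).ncard ≤
        (Y ∩ Set.Icc (y + 1) (y + (n : ℤ) + 1)).ncard := by
  have hfin := finite_window X (x + 1) (x + (n : ℤ) + 1)
  obtain ⟨t, ht⟩ := hfe hfin.toFinset (by simp)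
  refine ⟨t + x, Set.ncard_le_ncard_of_injOn (fun a => t + a) ?_ ?_ (finite_window Y _ _)⟩
  · intro a ha
    have h1 := ht a (hfin.mem_toFinset.2 ha)
    obtain ⟨-, h2, h3⟩ := ha
    exact ⟨h1, by omega, by omega⟩
  · exact (add_right_injective t).injOn

/-- Finite embeddability does not decrease upper Banach density. -/
theorem finEmbeddable_upperBanachDensity_le (X Y : Set ℤ)
    (hfe : FinEmbeddable X Y) :
    upperBanachDensity X ≤ upperBanachDensity Y := by
  refine ciInf_mono ⟨0, ?_⟩ fun n => ciSup_le fun x => ?_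
  · rintro _ ⟨n, rfl⟩
    exact Real.iSup_nonneg fun x => by positivity
  · obtain ⟨y, hy⟩ := hfe.exists_window_ncard_le n x
    refine le_ciSup_of_le (bddAbove_windowDensity Y n) y ?_
    gcongr
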